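/- arXiv:2507.00940 — 2 statements merged into one kernel-verified Lean document; each statement's English description precedes it below -/
import Mathlib

section
/- Let R be a commutative ring and M : Matrix (Fin k₁ ⊕ Fin k₂) (Fin l₁ ⊕ Fin l₂) R a matrix with k₁ + k₂ = l₁ + l₂ whose off-diagonal blocks vanish, i.e., M (Sum.inl i) (Sum.inr j) = 0 and M (Sum.inr i) (Sum.inl j) = 0 for all i, j. If k₁ ≠ l₁, then for every bijection e : (Fin k₁ ⊕ Fin k₂) ≃ (Fin l₁ ⊕ Fin l₂), the determinant of the square matrix (i, i′) ↦ M i (e i′) is zero. -/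
/-!
In the Leibniz expansion, the term of a permutation `σ` is, up to sign, `∏ i, M (σ i) (e i)`. A
nonzero term would make `σ i ↦ e i` a bijection from rows to columns that preserves the blocks, so
each block would contain as many rows as columns.
-/

theorem det_eq_zero_of_forall_perm_exists_eq_zero {R m : Type*} [CommRing R] [Fintype m]
    [DecidableEq m] {A : Matrix m m R} (hA : ∀ σ : Equiv.Perm m, ∃ i, A (σ i) i = 0) :
    A.det = 0 := by
  rw [Matrix.det_apply]
  refine Finset.sum_eq_zero fun σ _ => ?_
  obtain ⟨i, hi⟩ := hA σ
  have hprod : ∏ i, A (σ i) i = 0 := Finset.prod_eq_zero (Finset.mem_univ i) hi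
  rw [hprod, smul_zero]

theorem exists_ne_of_natCard_fiber_ne {m n α : Type*} {r : m → α} {c : n → α} {a : α}
    (hcard : Nat.card {i // r i = a} ≠ Nat.card {j // c j = a}) (e : m ≃ n) :
    ∃ i, r i ≠ c (e i) := by
  contrapose! hcard
  exact Nat.card_congr (e.subtypeEquiv fun i => by rw [hcard i])

theorem det_eq_zero_of_blocks_ne_general {R m n α : Type*} [CommRing R] [Fintype m]
    [DecidableEq m] {M : Matrix m n R} {r : m → α} {c : n → α}
    (hM : ∀ i j, r i ≠ c j → M i j = 0) {a : α}
    (hcard : Nat.card {i // r i = a} ≠ Nat.card {j // c j = a}) (e : m ≃ n) :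
    (M.submatrix id e).det = 0 := by
  refine det_eq_zero_of_forall_perm_exists_eq_zero fun σ => ?_
  obtain ⟨i, hi⟩ := exists_ne_of_natCard_fiber_ne hcard (σ.symm.trans e)
  exact ⟨σ.symm i, by simpa using hM i _ hi⟩

theorem natCard_isLeft {α β : Type*} : Nat.card {x : α ⊕ β // x.isLeft = true} = Nat.card α :=
  Nat.card_congr Equiv.sumIsLeft

/-- **Selection rule for minors of a block-structured matrix.**
If the off-diagonal blocks of `M : Matrix (Fin k₁ ⊕ Fin k₂) (Fin l₁ ⊕ Fin l₂) R` vanish and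
`k₁ ≠ l₁`, then for every bijection `e` between the row and column index types, the
determinant of the square matrix `(i, i′) ↦ M i (e i′)` is zero. -/
theorem det_eq_zero_of_blocks_ne {R : Type*} [CommRing R] {k₁ k₂ l₁ l₂ : ℕ}
    (M : Matrix (Fin k₁ ⊕ Fin k₂) (Fin l₁ ⊕ Fin l₂) R)
    (hsize : k₁ + k₂ = l₁ + l₂)
    (h₁ : ∀ (i : Fin k₁) (j : Fin l₂), M (Sum.inl i) (Sum.inr j) = 0)
    (h₂ : ∀ (i : Fin k₂) (j : Fin l₁), M (Sum.inr i) (Sum.inl j) = 0)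
    (hne : k₁ ≠ l₁)
    (e : (Fin k₁ ⊕ Fin k₂) ≃ (Fin l₁ ⊕ Fin l₂)) :
    (Matrix.of fun i i' => M i (e i')).det = 0 := by
  exact det_eq_zero_of_blocks_ne_general (r := Sum.isLeft) (c := Sum.isLeft) (a := true)
    (by simp [h₁, h₂]) (by simpa only [natCard_isLeft, Nat.card_fin] using hne) e
end

section
/- Jacobi's complementary-minor identity: let K be a field, A : Matrix (Fin n) (Fin n) K an invertible matrix, 0 ≤ k ≤ n, and let I, J : Fin k → Fin n be strictly monotone maps with strictly monotone complementary enumerations Iᶜ, Jᶜ : Fin (n−k) → Fin n (enumerating, in increasing order, the indices not in the range of I, resp. J). Then det A · det ((A⁻¹).submatrix Jᶜ Iᶜ) = (−1)^{Σ_{a} I a + Σ_{a} J a} · det (A.submatrix I J), where the sums are over the natural-number values of the entries of I and J. -/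
/-!
List the rows of `A` as `I` followed by `Iᶜ` and the columns as `J` followed by `Jᶜ`. This turns
`A` into a block matrix `M` with upper left block `A[I, J]`, and `M⁻¹` has lower right block
`A⁻¹[Jᶜ, Iᶜ]`. Replacing the left block column of `M⁻¹` by that of the identity gives a block
triangular matrix whose product with `M` is again block triangular; taking determinants yields
`det M * det A⁻¹[Jᶜ, Iᶜ] = det A[I, J]`.

To compare `det M` with `det A`, note that the permutation listing `I` and then `Iᶜ` has `I a - a`
inversions starting at position `a < k` and none starting later, so its sign is
`(-1) ^ ∑ a, (I a - a)`. The contributions `∑ a, a` of the rows and of the columns cancel.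
-/

open Equiv Matrix Finset

section BlockDeterminant

variable {R n p q : Type*} [CommRing R] [Fintype n] [DecidableEq n] [Fintype p] [DecidableEq p]
  [Fintype q] [DecidableEq q]

lemma det_mul_det_toBlocks₂₂_of_mul_eq_one {M N : Matrix (p ⊕ q) (p ⊕ q) R} (h : M * N = 1) :
    M.det * N.toBlocks₂₂.det = M.toBlocks₁₁.det := by
  have hblocks := h
  rw [← fromBlocks_toBlocks M, ← fromBlocks_toBlocks N, fromBlocks_multiply, ← fromBlocks_one,
    fromBlocks_inj] at hblocks
  obtain ⟨-, h₁₂, -, h₂₂⟩ := hblocks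
  have hmul : M * fromBlocks 1 N.toBlocks₁₂ 0 N.toBlocks₂₂ =
      fromBlocks M.toBlocks₁₁ 0 M.toBlocks₂₁ 1 := by
    nth_rewrite 1 [← fromBlocks_toBlocks M]
    simp [fromBlocks_multiply, h₁₂, h₂₂]
  simpa using congrArg det hmul

lemma det_mul_det_submatrix_inr_of_mul_eq_one {A B : Matrix n n R} (h : A * B = 1)
    (e f : p ⊕ q ≃ n) :
    A.det * (B.submatrix (f ∘ Sum.inr) (e ∘ Sum.inr)).det =
      Perm.sign (f.symm.trans e) * (A.submatrix (e ∘ Sum.inl) (f ∘ Sum.inl)).det := by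
  have hmul : A.submatrix e f * B.submatrix f e = 1 := by
    rw [submatrix_mul_equiv, h, submatrix_one_equiv]
  have hdet : (A.submatrix e f).det = Perm.sign (f.symm.trans e) * A.det :=
    det_reindex e.symm f.symm A
  have hminor : (A.submatrix e f).det * (B.submatrix (f ∘ Sum.inr) (e ∘ Sum.inr)).det =
      (A.submatrix (e ∘ Sum.inl) (f ∘ Sum.inl)).det :=
    det_mul_det_toBlocks₂₂_of_mul_eq_one hmul
  rw [← hminor, hdet, ← mul_assoc, ← mul_assoc, ← Int.cast_mul, Int.units_coe_mul_self,
    Int.cast_one, one_mul]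

end BlockDeterminant

section ShuffleSign

variable {k m n : ℕ}

lemma prod_Ioi_castAdd {M : Type*} [CommMonoid M] (f : Fin (k + m) → M) (a : Fin k) :
    ∏ x ∈ Ioi (Fin.castAdd m a), f x =
      (∏ b ∈ Ioi a, f (Fin.castAdd m b)) * ∏ c, f (Fin.natAdd k c) := by
  have hlt (c : Fin m) : Fin.castAdd m a < Fin.natAdd k c :=
    Fin.lt_def.2 (a.isLt.trans_le (Nat.le_add_right k c))
  simp only [← filter_lt_eq_Ioi, prod_filter, Fin.prod_univ_add, hlt, if_true,
    (Fin.strictMono_castAdd m).lt_iff_lt]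

lemma prod_Ioi_natAdd {M : Type*} [CommMonoid M] (f : Fin (k + m) → M) (c : Fin m) :
    ∏ x ∈ Ioi (Fin.natAdd k c), f x = ∏ d ∈ Ioi c, f (Fin.natAdd k d) := by
  rw [← Fin.map_natAddEmb_Ioi, prod_map]
  rfl

lemma sign_eq_prod_neg_one_pow_card {σ : Perm (Fin (k + m))}
    (hleft : StrictMono (σ ∘ Fin.castAdd m)) (hright : StrictMono (σ ∘ Fin.natAdd k)) :
    Perm.sign σ =
      ∏ a : Fin k, (-1) ^ #{c : Fin m | σ (Fin.natAdd k c) < σ (Fin.castAdd m a)} := by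
  have hleft_one (a : Fin k) : ∏ b ∈ Ioi a,
      (if σ (Fin.castAdd m a) < σ (Fin.castAdd m b) then (1 : ℤˣ) else -1) = 1 :=
    prod_eq_one fun _ hb ↦ if_pos (hleft (mem_Ioi.1 hb))
  have hright_one (c : Fin m) : ∏ d ∈ Ioi c,
      (if σ (Fin.natAdd k c) < σ (Fin.natAdd k d) then (1 : ℤˣ) else -1) = 1 :=
    prod_eq_one fun _ hd ↦ if_pos (hright (mem_Ioi.1 hd))
  have hne (a : Fin k) (c : Fin m) : σ (Fin.natAdd k c) ≠ σ (Fin.castAdd m a) :=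
    σ.injective.ne (Fin.ne_of_gt (Fin.lt_def.2 (a.isLt.trans_le (Nat.le_add_right k c))))
  rw [Perm.sign_eq_prod_prod_Ioi, Fin.prod_univ_add]
  simp only [prod_Ioi_castAdd, prod_Ioi_natAdd, hleft_one, hright_one, prod_const_one, one_mul,
    mul_one]
  refine prod_congr rfl fun a _ ↦ ?_
  simp only [prod_ite, prod_const_one, prod_const, one_mul, not_lt, (hne a _).le_iff_lt]

lemma card_inr_lt_inl_add {β : Type*} [Fintype β] {e : Fin k ⊕ β ≃ Fin n}
    (he : StrictMono (e ∘ Sum.inl)) (a : Fin k) :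
    #{c : β | e (Sum.inr c) < e (Sum.inl a)} + (a : ℕ) = e (Sum.inl a) := by
  have hlt (b : Fin k) : e (Sum.inl b) < e (Sum.inl a) ↔ b < a := he.lt_iff_lt
  calc #{c : β | e (Sum.inr c) < e (Sum.inl a)} + (a : ℕ)
      = #{c : β | e (Sum.inr c) < e (Sum.inl a)} +
          #{b : Fin k | e (Sum.inl b) < e (Sum.inl a)} := by
        simp only [hlt, filter_gt_eq_Iio, Fin.card_Iio]
    _ = ∑ s, if e s < e (Sum.inl a) then 1 else 0 := by
        rw [Fintype.sum_sum_type, card_filter, card_filter, add_comm]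
    _ = ∑ x, if x < e (Sum.inl a) then 1 else 0 :=
        e.sum_comp fun x ↦ if x < e (Sum.inl a) then 1 else 0
    _ = e (Sum.inl a) := by
        rw [← card_filter, filter_gt_eq_Iio, Fin.card_Iio]

lemma sign_finSumFinEquiv_symm_trans_mul_neg_one_pow_sum {e : Fin k ⊕ Fin m ≃ Fin (k + m)}
    (hinl : StrictMono (e ∘ Sum.inl)) (hinr : StrictMono (e ∘ Sum.inr)) :
    Perm.sign (finSumFinEquiv.symm.trans e) * (-1) ^ ∑ a : Fin k, (a : ℕ) =
      (-1) ^ ∑ a, (e (Sum.inl a) : ℕ) := by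
  have hleft : finSumFinEquiv.symm.trans e ∘ Fin.castAdd m = e ∘ Sum.inl := by ext; simp
  have hright : finSumFinEquiv.symm.trans e ∘ Fin.natAdd k = e ∘ Sum.inr := by ext; simp
  rw [sign_eq_prod_neg_one_pow_card (hleft ▸ hinl) (hright ▸ hinr), prod_pow_eq_pow_sum, ← pow_add,
    ← sum_add_distrib]
  simp [card_inr_lt_inl_add hinl]

lemma sign_symm_trans_of_strictMono {e f : Fin k ⊕ Fin m ≃ Fin n}
    (he_inl : StrictMono (e ∘ Sum.inl)) (he_inr : StrictMono (e ∘ Sum.inr))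
    (hf_inl : StrictMono (f ∘ Sum.inl)) (hf_inr : StrictMono (f ∘ Sum.inr)) :
    Perm.sign (f.symm.trans e) =
      (-1) ^ (∑ a, (e (Sum.inl a) : ℕ) + ∑ a, (f (Sum.inl a) : ℕ)) := by
  obtain rfl : k + m = n := by simpa using Fintype.card_congr e
  have hfactor : f.symm.trans e =
      (finSumFinEquiv.symm.trans f).symm.trans (finSumFinEquiv.symm.trans e) := by
    ext; simp
  rw [hfactor, Perm.sign_trans, Perm.sign_symm, pow_add,
    ← sign_finSumFinEquiv_symm_trans_mul_neg_one_pow_sum he_inl he_inr,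
    ← sign_finSumFinEquiv_symm_trans_mul_neg_one_pow_sum hf_inl hf_inr, mul_mul_mul_comm,
    Int.units_mul_self, mul_one]

end ShuffleSign

lemma bijective_sumElim_of_range_eq_compl {α β γ : Type*} {f : α → γ} {g : β → γ}
    (hf : f.Injective) (hg : g.Injective) (hfg : Set.range g = (Set.range f)ᶜ) :
    (Sum.elim f g).Bijective := by
  have hdisj : Disjoint (Set.range f) (Set.range g) := hfg ▸ disjoint_compl_right
  refine ⟨hf.sumElim hg fun a b ↦ hdisj.ne_of_mem ⟨a, rfl⟩ ⟨b, rfl⟩, Set.range_eq_univ.1 ?_⟩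
  rw [Set.Sum.elim_range, hfg, Set.union_compl_self]

theorem jacobi_complementary_minor_general {R : Type*} [CommRing R] {n k m : ℕ}
    {A : Matrix (Fin n) (Fin n) R} (hA : IsUnit A.det)
    {I J : Fin k → Fin n} (hI : StrictMono I) (hJ : StrictMono J)
    {Ic Jc : Fin m → Fin n} (hIc : StrictMono Ic) (hJc : StrictMono Jc)
    (hIcompl : Set.range Ic = (Set.range I)ᶜ) (hJcompl : Set.range Jc = (Set.range J)ᶜ) :
    A.det * (A⁻¹.submatrix Jc Ic).det =
      (-1) ^ (∑ a, (I a : ℕ) + ∑ a, (J a : ℕ)) * (A.submatrix I J).det := by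
  let e : Fin k ⊕ Fin m ≃ Fin n :=
    .ofBijective _ (bijective_sumElim_of_range_eq_compl hI.injective hIc.injective hIcompl)
  let f : Fin k ⊕ Fin m ≃ Fin n :=
    .ofBijective _ (bijective_sumElim_of_range_eq_compl hJ.injective hJc.injective hJcompl)
  have hsign : Perm.sign (f.symm.trans e) = (-1) ^ (∑ a, (I a : ℕ) + ∑ a, (J a : ℕ)) :=
    sign_symm_trans_of_strictMono (e := e) (f := f) hI hIc hJ hJc
  have hminor : A.det * (A⁻¹.submatrix Jc Ic).det =
      Perm.sign (f.symm.trans e) * (A.submatrix I J).det :=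
    det_mul_det_submatrix_inr_of_mul_eq_one (A.mul_nonsing_inv hA) e f
  simpa [hsign] using hminor

/-- **Jacobi's complementary-minor identity.**
For an invertible `n × n` matrix `A` over a field, a `k × k` minor of `A` (rows `I`, columns
`J`, both strictly monotone) is related to the complementary `(n−k) × (n−k)` minor of `A⁻¹`
(rows `Jᶜ`, columns `Iᶜ`, the strictly monotone enumerations of the complementary index
sets) by `det A · det (A⁻¹[Jᶜ, Iᶜ]) = (−1)^{Σ I + Σ J} · det (A[I, J])`. -/
theorem jacobi_complementary_minor {K : Type*} [Field K] {n k : ℕ} (hk : k ≤ n)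
    (A : Matrix (Fin n) (Fin n) K) (hA : IsUnit A.det)
    (I J : Fin k → Fin n) (hI : StrictMono I) (hJ : StrictMono J)
    (Ic Jc : Fin (n - k) → Fin n) (hIc : StrictMono Ic) (hJc : StrictMono Jc)
    (hIcompl : ∀ x : Fin n, x ∈ Set.range Ic ↔ x ∉ Set.range I)
    (hJcompl : ∀ x : Fin n, x ∈ Set.range Jc ↔ x ∉ Set.range J) :
    A.det * ((A⁻¹).submatrix Jc Ic).det
      = (-1 : K) ^ ((∑ a : Fin k, (I a : ℕ)) + ∑ a : Fin k, (J a : ℕ))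
        * (A.submatrix I J).det := by
  exact jacobi_complementary_minor_general hA hI hJ hIc hJc (Set.ext hIcompl) (Set.ext hJcompl)
end
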